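/- arXiv:1312.1523 — 2 statements merged into one kernel-verified Lean document; each statement's English description precedes it below -/
import Mathlib

section
/- Let t, k, n be positive integers with t ≥ 7, 2 ≤ k ≤ ⌊t/2⌋ − 1, N = (2^k − 1)·2^{t+1−k}, and 2^t < n < N. Set d = N − n, x = ⌊d / 2^{t+1−k}⌋, and p = ⌊log₂(x+1)⌋ if x > 0 and p = 0 if x = 0. Then there exists a connected simple graph G' on n vertices with exactly (k + 1 − p)·n − (2t − k + 2p + 4)·2^{k−1} + t − k − (p − 2)·2^p edges such that every vertex u of G' has broadcast time b(u) ≤ t + 1. -/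
/-- A broadcast protocol from originator `u` completing in `b` time units:
a nondecreasing sequence of informed sets `I 0 = {u}`, `I b = univ`, where at each
step every newly informed vertex is called by a distinct previously informed neighbor. -/
def IsBroadcastProtocol {V : Type*} (G : SimpleGraph V) (u : V) (b : ℕ) : Prop :=
  ∃ I : ℕ → Set V,
    I 0 = {u} ∧
    (∀ i, I i ⊆ I (i + 1)) ∧
    I b = Set.univ ∧
    ∀ i, ∃ f : (I (i + 1) \ I i : Set V) → (I i : Set V),
      Function.Injective f ∧ ∀ v, G.Adj (f v) v

/-- The broadcast time `b(u)`: the minimum number of time units needed to broadcast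
from `u` to all vertices. -/
noncomputable def broadcastTime {V : Type*} (G : SimpleGraph V) (u : V) : ℕ :=
  sInf {b | IsBroadcastProtocol G u b}

/-- The broadcast function `B(n)`: the minimum number of edges of a broadcast graph on
`n` vertices, i.e. a connected graph in which every vertex can broadcast within
`⌈log₂ n⌉` time units. -/
noncomputable def broadcastFunction (n : ℕ) : ℕ :=
  sInf {m | ∃ G : SimpleGraph (Fin n), G.Connected ∧ G.edgeSet.ncard = m ∧
    ∀ u, broadcastTime G u ≤ Nat.clog 2 n}

section Generic
variable {V : Type*}

/-- One round of calls, described through a relation that is functional from caller to callee. -/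
def BStep (G : SimpleGraph V) (A B : Set V) : Prop :=
  A ⊆ B ∧ ∃ R : V → V → Prop,
    (∀ v ∈ B, v ∉ A → ∃ w ∈ A, R w v ∧ G.Adj w v) ∧
    (∀ w ∈ A, ∀ v ∈ B, v ∉ A → ∀ v' ∈ B, v' ∉ A → R w v → R w v' → v = v')

lemma BStep.exists_fun {G : SimpleGraph V} {A B : Set V} (h : BStep G A B) :
    ∃ f : (B \ A : Set V) → (A : Set V), Function.Injective f ∧ ∀ v, G.Adj (f v) v := by
  obtain ⟨_, R, h1, h2⟩ := h
  have h3 : ∀ v : (B \ A : Set V), ∃ w : (A : Set V), R w v ∧ G.Adj w v := by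
    rintro ⟨v, hv, hv'⟩
    obtain ⟨w, hw, h⟩ := h1 v hv hv'
    exact ⟨⟨w, hw⟩, h⟩
  choose f hf using h3
  refine ⟨f, ?_, fun v => (hf v).2⟩
  intro v v' e
  apply Subtype.ext
  refine h2 (f v) (f v).2 v v.2.1 v.2.2 v' v'.2.1 v'.2.2 (hf v).1 ?_
  rw [e]
  exact (hf v').1

lemma protocol_of_steps {G : SimpleGraph V} {u : V} {b : ℕ} (I : ℕ → Set V)
    (h0 : I 0 = {u}) (hs : ∀ i, BStep G (I i) (I (i + 1))) (hb : I b = Set.univ) :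
    IsBroadcastProtocol G u b :=
  ⟨I, h0, fun i => (hs i).1, hb, fun i => (hs i).exists_fun⟩

lemma IsBroadcastProtocol.mono {G G' : SimpleGraph V} (hG : G ≤ G') {u : V} {b : ℕ}
    (h : IsBroadcastProtocol G u b) : IsBroadcastProtocol G' u b := by
  obtain ⟨I, h0, h1, h2, h3⟩ := h
  refine ⟨I, h0, h1, h2, fun i => ?_⟩
  obtain ⟨f, hf, hf'⟩ := h3 i
  exact ⟨f, hf, fun v => hG (hf' v)⟩

lemma IsBroadcastProtocol.reachable {G : SimpleGraph V} {u : V} {b : ℕ}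
    (h : IsBroadcastProtocol G u b) (v : V) : G.Reachable u v := by
  obtain ⟨I, h0, h1, h2, h3⟩ := h
  have key : ∀ i, ∀ v ∈ I i, G.Reachable u v := by
    intro i
    induction i with
    | zero =>
      intro v hv
      rw [h0] at hv
      rw [Set.mem_singleton_iff.1 hv]
    | succ i ih =>
      intro v hv
      by_cases hv' : v ∈ I i
      · exact ih v hv'
      · obtain ⟨f, _, hf⟩ := h3 i
        exact (ih _ (f ⟨v, hv, hv'⟩).2).trans (hf ⟨v, hv, hv'⟩).reachable
  exact key b v (by rw [h2]; trivial)

end Generic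

/-- Padding a broadcast graph with extra edges. -/
lemma exists_padded {n b m : ℕ} (hn : 0 < n) (G : SimpleGraph (Fin n))
    (hG : ∀ u, IsBroadcastProtocol G u b) (h1 : G.edgeSet.ncard ≤ m) (h2 : m ≤ n.choose 2) :
    ∃ G' : SimpleGraph (Fin n), G'.Connected ∧ G'.edgeSet.ncard = m ∧
      ∀ u, broadcastTime G' u ≤ b := by
  classical
  have hc : (⊤ : SimpleGraph (Fin n)).edgeFinset.card = n.choose 2 := by
    rw [SimpleGraph.card_edgeFinset_top_eq_card_choose_two, Fintype.card_fin]
  have hsub : G.edgeFinset ⊆ (⊤ : SimpleGraph (Fin n)).edgeFinset :=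
    SimpleGraph.edgeFinset_mono le_top
  have h1' : G.edgeFinset.card ≤ m := by
    rw [← SimpleGraph.coe_edgeFinset, Set.ncard_coe_finset] at h1
    exact h1
  obtain ⟨E, hE1, hE2, hE3⟩ := Finset.exists_subsuperset_card_eq hsub h1' (by rw [hc]; exact h2)
  have hE : (SimpleGraph.fromEdgeSet (E : Set (Sym2 (Fin n)))).edgeSet = E := by
    rw [SimpleGraph.edgeSet_fromEdgeSet]
    ext e
    simp only [Set.mem_sdiff, and_iff_left_iff_imp]
    intro he
    have := hE2 he
    rw [SimpleGraph.mem_edgeFinset] at this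
    exact SimpleGraph.not_isDiag_of_mem_edgeSet _ this
  have hle : G ≤ SimpleGraph.fromEdgeSet (E : Set (Sym2 (Fin n))) := by
    rw [← SimpleGraph.edgeSet_subset_edgeSet, hE]
    intro e he
    exact hE1 (SimpleGraph.mem_edgeFinset.2 he)
  refine ⟨SimpleGraph.fromEdgeSet (E : Set (Sym2 (Fin n))), ?_, ?_, ?_⟩
  · have : Nonempty (Fin n) := ⟨⟨0, hn⟩⟩
    exact SimpleGraph.Connected.mk (fun u v => ((hG u).mono hle).reachable v)
  · rw [hE, Set.ncard_coe_finset, hE3]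
  · intro u
    exact Nat.sInf_le ((hG u).mono hle)

/-- The vertices (encoded as `v = M * e + c`) which need no edge to their designated vertex. -/
def specSet (a q M : ℕ) : Finset ℕ :=
  Finset.range (M * 2 ^ q) ∪
    (Finset.Ico q a).biUnion (fun i => Finset.Ico (M * 2 ^ i) (M * 2 ^ i + M * 2 ^ q))

/-- Local out-neighbours inside the cluster. -/
def bitSet (a q e : ℕ) : Finset ℕ :=
  (Finset.range a).filter (fun i => e.testBit i = true ∧ (e < 2 ^ q ∨ e < 2 ^ (i + 1)))

/-- The out-neighbours of `v` in the orientation used for counting. -/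
def outSet (h a q M v : ℕ) : Finset ℕ :=
  (Finset.range h).image (fun j => (v + 2 ^ j) % M) ∪
  (if v < M then {(v + (2 ^ h - 1)) % M} else ∅) ∪
  (if v ∈ specSet a q M then ∅ else {v % M}) ∪
  (bitSet a q (v / M)).image (fun i => M * ((v / M) ^^^ 2 ^ i) + v % M)

/-- The broadcast graph. -/
def bGraph (h a q M n : ℕ) : SimpleGraph (Fin n) :=
  SimpleGraph.fromRel (fun v w : Fin n => w.val ∈ outSet h a q M v.val)

lemma bGraph_card_le (h a q M n : ℕ) :
    (bGraph h a q M n).edgeSet.ncard ≤ ∑ v ∈ Finset.range n, (outSet h a q M v).card := by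
  classical
  have h1 : (bGraph h a q M n).edgeSet ⊆
      (((Finset.univ : Finset (Fin n)).biUnion (fun v =>
        ((Finset.univ : Finset (Fin n)).filter (fun w => w.val ∈ outSet h a q M v.val)).image
          (fun w => s(v, w))) : Finset (Sym2 (Fin n))) : Set (Sym2 (Fin n))) := by
    intro e
    induction e using Sym2.ind with
    | _ x y =>
      intro hxy
      rw [SimpleGraph.mem_edgeSet, bGraph, SimpleGraph.fromRel_adj] at hxy
      simp only [Finset.coe_biUnion, Set.mem_iUnion, Finset.mem_coe, Finset.mem_image,
        Finset.mem_filter, Finset.mem_univ, true_and]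
      rcases hxy.2 with h | h
      · exact ⟨x, trivial, y, h, rfl⟩
      · exact ⟨y, trivial, x, h, Sym2.eq_swap⟩
  refine (Set.ncard_le_ncard h1 (Finset.finite_toSet _)).trans ?_
  rw [Set.ncard_coe_finset]
  refine Finset.card_biUnion_le.trans ?_
  rw [Finset.sum_range]
  refine Finset.sum_le_sum fun v _ => Finset.card_image_le.trans ?_
  refine Finset.card_le_card_of_injOn (fun w : Fin n => w.val) ?_ ?_
  · intro w hw
    simpa using hw
  · intro w _ w' _ e
    exact Fin.ext e

lemma xor_two_pow_of_ge {w i : ℕ} (h1 : 2 ^ i ≤ w) (h2 : w < 2 ^ (i + 1)) :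
    w ^^^ 2 ^ i = w - 2 ^ i ∧ w.testBit i = true := by
  obtain ⟨c, rfl⟩ := Nat.exists_eq_add_of_le h1
  have hc : c < 2 ^ i := by rw [pow_succ] at h2; omega
  have hb : (2 ^ i + c).testBit i = true := by
    rw [Nat.testBit_two_pow_add_eq, Nat.testBit_lt_two_pow hc]; rfl
  refine ⟨?_, hb⟩
  rw [Nat.add_sub_cancel_left]
  apply Nat.eq_of_testBit_eq
  intro j
  rw [Nat.testBit_xor, Nat.testBit_two_pow]
  rcases lt_trichotomy j i with hj | hj | hj
  · rw [Nat.testBit_two_pow_add_gt hj]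
    simp [hj.ne']
  · subst hj
    rw [hb, Nat.testBit_lt_two_pow hc]; simp
  · have h3 : 2 ^ (i + 1) ≤ 2 ^ j := Nat.pow_le_pow_right (by norm_num) hj
    rw [Nat.testBit_lt_two_pow (h2.trans_le h3),
      Nat.testBit_lt_two_pow (hc.trans_le (Nat.pow_le_pow_right (by norm_num) hj.le))]
    simp [hj.ne]

lemma specSet_subset {a q M n : ℕ} (hqa : q + 1 ≤ a) (hn : M * (2 ^ (a - 1) + 2 ^ q) ≤ n) :
    specSet a q M ⊆ Finset.range n := by
  intro v hv
  simp only [specSet, Finset.mem_union, Finset.mem_range, Finset.mem_biUnion, Finset.mem_Ico] at *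
  rw [Nat.mul_add] at hn
  rcases hv with hv | ⟨i, ⟨hi1, hi2⟩, hv1, hv2⟩
  · omega
  · have : M * 2 ^ i ≤ M * 2 ^ (a - 1) :=
      Nat.mul_le_mul_left _ (Nat.pow_le_pow_right (by norm_num) (by omega))
    omega

lemma specSet_card {a q M : ℕ} :
    (specSet a q M).card = M * 2 ^ q * (1 + (a - q)) := by
  have hpow : ∀ i j : ℕ, q ≤ i → i < j → M * 2 ^ i + M * 2 ^ q ≤ M * 2 ^ j := by
    intro i j hi hj
    rw [← Nat.mul_add]
    apply Nat.mul_le_mul_left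
    have h1 : 2 ^ q ≤ 2 ^ i := Nat.pow_le_pow_right (by norm_num) hi
    have h2 : 2 ^ (i + 1) ≤ 2 ^ j := Nat.pow_le_pow_right (by norm_num) hj
    rw [pow_succ] at h2
    omega
  rw [specSet, Finset.card_union_of_disjoint, Finset.card_biUnion]
  · simp only [Finset.card_range, Nat.card_Ico, Nat.add_sub_cancel_left, Finset.sum_const,
      smul_eq_mul]
    ring
  · intro i hi j hj hij
    rw [Finset.mem_coe, Finset.mem_Ico] at hi hj
    change Disjoint (Finset.Ico _ _) (Finset.Ico _ _)
    rw [Finset.disjoint_left]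
    intro v hv hv'
    rw [Finset.mem_Ico] at hv hv'
    rcases lt_or_gt_of_ne hij with h | h
    · have := hpow i j hi.1 h
      omega
    · have := hpow j i hj.1 h
      omega
  · rw [Finset.disjoint_left]
    intro v hv hv'
    simp only [Finset.mem_range, Finset.mem_biUnion, Finset.mem_Ico] at hv hv'
    obtain ⟨i, hi, hv1, hv2⟩ := hv'
    have : M * 2 ^ q ≤ M * 2 ^ i :=
      Nat.mul_le_mul_left _ (Nat.pow_le_pow_right (by norm_num) hi.1)
    omega

/-- Number of set bits among the first `q`. -/
def popc (q e : ℕ) : ℕ := ((Finset.range q).filter (fun i => e.testBit i = true)).card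

lemma popc_succ (q e : ℕ) :
    popc (q + 1) e = popc q e + (if e.testBit q = true then 1 else 0) := by
  unfold popc
  rw [Finset.range_add_one, Finset.filter_insert]
  split_ifs with h
  · rw [Finset.card_insert_of_notMem (by simp)]
  · rfl

lemma sum_popc (M : ℕ) (hM : 0 < M) (q : ℕ) :
    2 * ∑ v ∈ Finset.range (M * 2 ^ q), popc q (v / M) = M * q * 2 ^ q := by
  induction q with
  | zero => simp [popc]
  | succ q ih =>
    have e1 : M * 2 ^ (q + 1) = M * 2 ^ q + M * 2 ^ q := by ring
    rw [e1, Finset.sum_range_add]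
    have h1 : ∑ v ∈ Finset.range (M * 2 ^ q), popc (q + 1) (v / M) =
        ∑ v ∈ Finset.range (M * 2 ^ q), popc q (v / M) := by
      refine Finset.sum_congr rfl fun v hv => ?_
      rw [Finset.mem_range] at hv
      have : v / M < 2 ^ q := Nat.div_lt_of_lt_mul hv
      rw [popc_succ, Nat.testBit_lt_two_pow this]
      simp
    have h2 : ∑ v ∈ Finset.range (M * 2 ^ q), popc (q + 1) ((M * 2 ^ q + v) / M) =
        ∑ v ∈ Finset.range (M * 2 ^ q), (popc q (v / M) + 1) := by
      refine Finset.sum_congr rfl fun v hv => ?_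
      rw [Finset.mem_range] at hv
      have : v / M < 2 ^ q := Nat.div_lt_of_lt_mul hv
      rw [Nat.mul_add_div hM, popc_succ, Nat.testBit_two_pow_add_eq, Nat.testBit_lt_two_pow this]
      simp only [Bool.not_false, if_true]
      congr 1
      unfold popc
      congr 1
      refine Finset.filter_congr fun i hi => ?_
      rw [Finset.mem_range] at hi
      rw [Nat.testBit_two_pow_add_gt hi]
    rw [h1, h2, Finset.sum_add_distrib, Finset.sum_const, Finset.card_range, smul_eq_mul]
    have : M * (q + 1) * 2 ^ (q + 1) = M * q * 2 ^ q + M * q * 2 ^ q + 2 * (M * 2 ^ q) := by ring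
    rw [this, ← ih]
    ring

lemma bitSet_card_le_popc {a q e : ℕ} (he : e < 2 ^ q) : (bitSet a q e).card ≤ popc q e := by
  unfold bitSet popc
  apply Finset.card_le_card
  intro i hi
  simp only [Finset.mem_filter, Finset.mem_range] at hi ⊢
  refine ⟨?_, hi.2.1⟩
  by_contra hc
  have := Nat.testBit_lt_two_pow (he.trans_le (Nat.pow_le_pow_right (by norm_num) (not_lt.1 hc)))
  rw [this] at hi
  simp at hi

lemma bitSet_card_le_one {a q e : ℕ} (he : 2 ^ q ≤ e) : (bitSet a q e).card ≤ 1 := by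
  rw [Finset.card_le_one]
  have key : ∀ i ∈ bitSet a q e, Nat.log 2 e = i := by
    intro i hi
    simp only [bitSet, Finset.mem_filter, Finset.mem_range] at hi
    have h1 := Nat.ge_two_pow_of_testBit hi.2.1
    exact Nat.log_eq_of_pow_le_of_lt_pow h1 (by omega)
  intro i hi j hj
  rw [← key i hi, ← key j hj]

lemma sum_bitSet {a q M n : ℕ} (hM : 0 < M) (hn : M * 2 ^ q ≤ n) :
    2 * ∑ v ∈ Finset.range n, (bitSet a q (v / M)).card + 2 * (M * 2 ^ q) ≤
      M * q * 2 ^ q + 2 * n := by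
  obtain ⟨c, rfl⟩ := Nat.exists_eq_add_of_le hn
  rw [Finset.sum_range_add, ← sum_popc M hM q]
  have h1 : ∑ v ∈ Finset.range (M * 2 ^ q), (bitSet a q (v / M)).card ≤
      ∑ v ∈ Finset.range (M * 2 ^ q), popc q (v / M) :=
    Finset.sum_le_sum fun v hv =>
      bitSet_card_le_popc (Nat.div_lt_of_lt_mul (Finset.mem_range.1 hv))
  have h2 : ∑ v ∈ Finset.range c, (bitSet a q ((M * 2 ^ q + v) / M)).card ≤
      ∑ v ∈ Finset.range c, 1 :=
    Finset.sum_le_sum fun v hv => by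
      apply bitSet_card_le_one
      rw [Nat.mul_add_div hM]
      exact Nat.le_add_right _ _
  rw [Finset.sum_const, Finset.card_range, smul_eq_mul, mul_one] at h2
  omega

lemma outSet_card_le (h a q M v : ℕ) :
    (outSet h a q M v).card ≤
      h + (if v < M then 1 else 0) + (if v ∈ specSet a q M then 0 else 1) +
        (bitSet a q (v / M)).card := by
  unfold outSet
  refine (Finset.card_union_le _ _).trans (Nat.add_le_add ?_ Finset.card_image_le)
  refine (Finset.card_union_le _ _).trans (Nat.add_le_add ?_ (by split_ifs <;> simp))
  refine (Finset.card_union_le _ _).trans (Nat.add_le_add ?_ (by split_ifs <;> simp))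
  exact Finset.card_image_le.trans (by simp)

lemma sum_outSet {h a q M n : ℕ} (hM : 0 < M) (hqa : q + 1 ≤ a)
    (hn : M * (2 ^ (a - 1) + 2 ^ q) ≤ n) :
    2 * ∑ v ∈ Finset.range n, (outSet h a q M v).card + 2 * (M * 2 ^ q * (2 + (a - q))) ≤
      2 * (h + 2) * n + 2 * M + M * q * 2 ^ q := by
  have hn' := hn
  rw [Nat.mul_add] at hn'
  have hpos : 0 < 2 ^ q := by positivity
  have hMq : M ≤ M * 2 ^ q := Nat.le_mul_of_pos_right _ hpos
  have h1 : ∑ v ∈ Finset.range n, (outSet h a q M v).card ≤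
      ∑ v ∈ Finset.range n, (h + (if v < M then 1 else 0) +
        (if v ∈ specSet a q M then 0 else 1) + (bitSet a q (v / M)).card) :=
    Finset.sum_le_sum fun v _ => outSet_card_le h a q M v
  rw [Finset.sum_add_distrib, Finset.sum_add_distrib, Finset.sum_add_distrib, Finset.sum_const,
    Finset.card_range, smul_eq_mul] at h1
  have h2 : ∑ v ∈ Finset.range n, (if v < M then 1 else 0) ≤ M := by
    rw [← Finset.card_filter]
    refine (Finset.card_le_card (t := Finset.range M) ?_).trans (by simp)
    intro v hv
    simp only [Finset.mem_filter, Finset.mem_range] at hv ⊢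
    exact hv.2
  have h3 : ∑ v ∈ Finset.range n, (if v ∈ specSet a q M then 0 else 1) +
      M * 2 ^ q * (1 + (a - q)) = n := by
    have e : ∑ v ∈ Finset.range n, (if v ∈ specSet a q M then 0 else 1) =
        (Finset.range n \ specSet a q M).card := by
      rw [← Finset.filter_notMem_eq_sdiff, Finset.card_filter]
      exact Finset.sum_congr rfl fun v _ => by split_ifs <;> simp_all
    rw [e, ← specSet_card, Finset.card_sdiff_add_card_eq_card (specSet_subset hqa hn),
      Finset.card_range]
  have h4 := sum_bitSet (a := a) (q := q) hM (n := n) (by omega)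
  have e5 : M * 2 ^ q * (2 + (a - q)) = M * 2 ^ q * (1 + (a - q)) + M * 2 ^ q := by ring
  have e6 : 2 * (h + 2) * n = 2 * (n * h) + 4 * n := by ring
  rw [e5, e6]
  omega

/-- Cyclic offset of the cluster of `v` from the cluster `x`. -/
def offs (M x v : ℕ) : ℕ := (v % M + (M - x)) % M

lemma offs_eq {M x v : ℕ} (hx : x < M) :
    (x ≤ v % M ∧ offs M x v = v % M - x) ∨ (v % M < x ∧ offs M x v = v % M + M - x) := by
  have hv : v % M < M := Nat.mod_lt _ (by omega)
  unfold offs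
  rcases le_or_gt x (v % M) with h | h
  · left
    refine ⟨h, ?_⟩
    rw [show v % M + (M - x) = v % M - x + M by omega, Nat.add_mod_right,
      Nat.mod_eq_of_lt (by omega)]
  · right
    refine ⟨h, ?_⟩
    rw [Nat.mod_eq_of_lt (by omega)]
    omega

lemma offs_add {M x v : ℕ} (hx : x < M) : (x + offs M x v) % M = v % M := by
  have hv : v % M < M := Nat.mod_lt _ (by omega)
  rcases offs_eq (v := v) hx with ⟨h1, h2⟩ | ⟨h1, h2⟩
  · rw [h2, show x + (v % M - x) = v % M by omega, Nat.mod_mod]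
  · rw [h2, show x + (v % M + M - x) = v % M + M by omega, Nat.add_mod_right, Nat.mod_mod]

lemma offs_shift {M x v w s : ℕ} (hx : x < M) (hv : v < M)
    (h : offs M x v = offs M x w + s) : v = (w + s) % M := by
  have h1 := offs_add (v := v) hx
  rw [Nat.mod_eq_of_lt hv, h, ← add_assoc, Nat.add_mod, offs_add hx] at h1
  rw [← h1, Nat.add_mod w s M]

lemma offs_lt {M x v : ℕ} (hx : x < M) : offs M x v < M := Nat.mod_lt _ (by omega)

lemma offs_surj {M x o : ℕ} (hx : x < M) (ho : o < M) : ∃ w < M, offs M x w = o := by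
  refine ⟨(x + o) % M, Nat.mod_lt _ (by omega), ?_⟩
  have h1 : offs M x ((x + o) % M) < M := offs_lt hx
  unfold offs
  rw [Nat.mod_mod, Nat.mod_add_mod, show x + o + (M - x) = o + M by omega, Nat.add_mod_right,
    Nat.mod_eq_of_lt ho]

lemma offs_inj {M x v w : ℕ} (hx : x < M) (hv : v < M) (hw : w < M)
    (h : offs M x v = offs M x w) : v = w := by
  have := offs_shift (s := 0) hx hv h
  rwa [add_zero, Nat.mod_eq_of_lt hw] at this

lemma exists_relay {h a q M u : ℕ} (hM : 0 < M) :
    ∃ r < 2 ^ q, r = u / M ∨ (M * r + u % M ∈ outSet h a q M u) := by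
  by_cases hs : u ∈ specSet a q M
  · have hs' := hs
    simp only [specSet, Finset.mem_union, Finset.mem_range, Finset.mem_biUnion,
      Finset.mem_Ico] at hs'
    rcases hs' with h1 | ⟨i, ⟨hi1, hi2⟩, h1, h2⟩
    · exact ⟨u / M, Nat.div_lt_of_lt_mul h1, Or.inl rfl⟩
    · have e1 : 2 ^ i ≤ u / M := (Nat.le_div_iff_mul_le hM).2 (by rw [mul_comm]; exact h1)
      have e2 : u / M < 2 ^ i + 2 ^ q := Nat.div_lt_of_lt_mul (by rw [Nat.mul_add]; exact h2)
      have e3 : 2 ^ q ≤ 2 ^ i := Nat.pow_le_pow_right (by norm_num) hi1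
      have e4 : u / M < 2 ^ (i + 1) := by rw [pow_succ]; omega
      obtain ⟨e5, e6⟩ := xor_two_pow_of_ge e1 e4
      refine ⟨u / M - 2 ^ i, by omega, Or.inr ?_⟩
      unfold outSet
      apply Finset.mem_union_right
      refine Finset.mem_image.2 ⟨i, ?_, by rw [e5]⟩
      simp only [bitSet, Finset.mem_filter, Finset.mem_range]
      exact ⟨hi2, e6, Or.inr e4⟩
  · refine ⟨0, by positivity, Or.inr ?_⟩
    unfold outSet
    apply Finset.mem_union_left
    apply Finset.mem_union_right
    rw [if_neg hs]
    simp

lemma bGraph_adj {h a q M n : ℕ} {v w : Fin n} (hne : v ≠ w)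
    (hvw : w.val ∈ outSet h a q M v.val ∨ v.val ∈ outSet h a q M w.val) :
    (bGraph h a q M n).Adj v w := by
  rw [bGraph, SimpleGraph.fromRel_adj]
  exact ⟨hne, hvw⟩

lemma mem_outSet_shift {h a q M v j : ℕ} (hj : j < h) : (v + 2 ^ j) % M ∈ outSet h a q M v := by
  unfold outSet
  apply Finset.mem_union_left
  apply Finset.mem_union_left
  apply Finset.mem_union_left
  exact Finset.mem_image.2 ⟨j, Finset.mem_range.2 hj, rfl⟩

lemma mem_outSet_last {h a q M v : ℕ} (hv : v < M) :
    (v + (2 ^ h - 1)) % M ∈ outSet h a q M v := by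
  unfold outSet
  apply Finset.mem_union_left
  apply Finset.mem_union_left
  apply Finset.mem_union_right
  rw [if_pos hv]
  simp

lemma mem_outSet_bit {h a q M v i : ℕ} (hi : i < a) (h1 : (v / M).testBit i = true)
    (h2 : v / M < 2 ^ q ∨ v / M < 2 ^ (i + 1)) :
    M * ((v / M) ^^^ 2 ^ i) + v % M ∈ outSet h a q M v := by
  unfold outSet
  apply Finset.mem_union_right
  refine Finset.mem_image.2 ⟨i, ?_, rfl⟩
  simp only [bitSet, Finset.mem_filter, Finset.mem_range]
  exact ⟨hi, h1, h2⟩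

/-- Informed set in the first phase. -/
def phaseA {n : ℕ} (M : ℕ) (u : Fin n) (j : ℕ) : Set (Fin n) :=
  {v | v = u ∨ (v.val < M ∧ 1 ≤ offs M (u.val % M) v.val ∧ offs M (u.val % M) v.val < 2 ^ j)}

/-- Relay of the cluster of `v`. -/
def rel (M u r v : ℕ) : ℕ := if v % M = u % M then r else 0

/-- Informed set in the second phase. -/
def phaseC {n : ℕ} (M r : ℕ) (u : Fin n) (i : ℕ) : Set (Fin n) :=
  {v | v = u ∨ ((v.val / M) ^^^ rel M u.val r v.val) < 2 ^ i}

lemma stepA {h a q M n : ℕ} (hM : M + 1 = 2 ^ (h + 1)) (hMn : M ≤ n) (u : Fin n) {j : ℕ}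
    (hj : j < h) : BStep (bGraph h a q M n) (phaseA M u j) (phaseA M u (j + 1)) := by
  have hpj : 2 ^ (j + 1) ≤ 2 ^ h := Nat.pow_le_pow_right (by norm_num) hj
  have hp1 : 1 ≤ 2 ^ j := Nat.one_le_two_pow
  have hp2 : 2 ^ (j + 1) = 2 ^ j + 2 ^ j := by ring
  have hp3 : 2 ^ (h + 1) = 2 ^ h + 2 ^ h := by ring
  have hM0 : 0 < M := by omega
  have hx : u.val % M < M := Nat.mod_lt _ hM0
  have hu0 : offs M (u.val % M) u.val = 0 := by
    rcases offs_eq (v := u.val) hx with h1 | h1 <;> omega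
  refine ⟨?_, fun w v => offs M (u.val % M) v.val = offs M (u.val % M) w.val + 2 ^ j, ?_, ?_⟩
  · intro v hv
    rcases hv with hv | ⟨h1, h2, h3⟩
    · exact Or.inl hv
    · exact Or.inr ⟨h1, h2, by omega⟩
  · intro v hv hv'
    rcases hv with hv | ⟨h1, h2, h3⟩
    · exact absurd (Or.inl hv) hv'
    have h4 : 2 ^ j ≤ offs M (u.val % M) v.val := by
      by_contra hc
      exact hv' (Or.inr ⟨h1, h2, by omega⟩)
    have hvM := offs_lt (v := v.val) hx
    rcases Nat.eq_or_lt_of_le h4 with h5 | h5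
    · have h6 : offs M (u.val % M) v.val = offs M (u.val % M) u.val + 2 ^ j := by omega
      refine ⟨u, Or.inl rfl, h6, bGraph_adj ?_ (Or.inl ?_)⟩
      · rintro rfl
        exact hv' (Or.inl rfl)
      · rw [offs_shift hx h1 h6]
        exact mem_outSet_shift hj
    · obtain ⟨w, hw, hw'⟩ := offs_surj (o := offs M (u.val % M) v.val - 2 ^ j) hx (by omega)
      have h6 : offs M (u.val % M) v.val = offs M (u.val % M) w + 2 ^ j := by omega
      have hwA : (⟨w, by omega⟩ : Fin n) ∈ phaseA M u j :=
        Or.inr ⟨hw, by simp only; omega, by simp only; omega⟩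
      refine ⟨⟨w, by omega⟩, hwA, h6, bGraph_adj ?_ (Or.inl ?_)⟩
      · intro e
        rw [e] at hwA
        exact hv' hwA
      · rw [offs_shift hx h1 h6]
        exact mem_outSet_shift hj
  · intro w _ v hv hv1 v' hv' hv1' h1 h2
    rcases hv with hv | ⟨h3, _⟩
    · exact absurd (Or.inl hv) hv1
    rcases hv' with hv' | ⟨h3', _⟩
    · exact absurd (Or.inl hv') hv1'
    exact Fin.ext (offs_inj hx h3 h3' (by omega))

lemma stepB {h a q M n r : ℕ} (hM : M + 1 = 2 ^ (h + 1)) (hh : 1 ≤ h)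
    (hMn : M * 2 ^ q ≤ n) (u : Fin n)
    (hr : r < 2 ^ q) (hr' : r = u.val / M ∨ (M * r + u.val % M ∈ outSet h a q M u.val)) :
    BStep (bGraph h a q M n) (phaseA M u h) (phaseC M r u 0) := by
  have hp1 : 2 ^ 1 ≤ 2 ^ h := Nat.pow_le_pow_right (by norm_num) hh
  have hp3 : 2 ^ (h + 1) = 2 ^ h + 2 ^ h := by ring
  have hM0 : 0 < M := by omega
  have hMn' : M ≤ n := (Nat.le_mul_of_pos_right M (by positivity : 0 < 2 ^ q)).trans hMn
  have hx : u.val % M < M := Nat.mod_lt _ hM0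
  have hC : ∀ v : Fin n, v ∈ phaseC M r u 0 → v ≠ u →
      (v.val % M = u.val % M ∧ v.val / M = r) ∨ (v.val % M ≠ u.val % M ∧ v.val < M) := by
    intro v hv hvu
    rcases hv with hv | hv
    · exact absurd hv hvu
    rw [pow_zero, Nat.lt_one_iff, Nat.xor_eq_zero_iff, rel] at hv
    split_ifs at hv with h1
    · exact Or.inl ⟨h1, hv⟩
    · refine Or.inr ⟨h1, ?_⟩
      rcases Nat.div_eq_zero_iff.1 hv with h2 | h2 <;> omega
  have hoff : ∀ v : Fin n, v.val % M ≠ u.val % M → 1 ≤ offs M (u.val % M) v.val := by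
    intro v hv
    rcases offs_eq (v := v.val) hx with h1 | h1 <;> omega
  have hoff' : ∀ v : Fin n, 1 ≤ offs M (u.val % M) v.val → v.val % M ≠ u.val % M := by
    intro v hv
    rcases offs_eq (v := v.val) hx with h1 | h1 <;> omega
  refine ⟨?_, fun w v => (w = u ∧ v.val % M = u.val % M) ∨ (w ≠ u ∧ v.val % M ≠ u.val % M ∧
    offs M (u.val % M) v.val = offs M (u.val % M) w.val + (2 ^ h - 1)), ?_, ?_⟩
  · intro v hv
    rcases hv with hv | ⟨h1, h2, h3⟩
    · exact Or.inl hv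
    · right
      rw [rel, if_neg (hoff' v h2), Nat.div_eq_of_lt h1]
      simp
  · intro v hv hv'
    have hvu : v ≠ u := fun e => hv' (Or.inl e)
    rcases hC v hv hvu with ⟨h1, h2⟩ | ⟨h1, h2⟩
    · refine ⟨u, Or.inl rfl, Or.inl ⟨rfl, h1⟩, bGraph_adj hvu.symm (Or.inl ?_)⟩
      have e : v.val = M * r + u.val % M := by
        rw [← h1, ← h2, Nat.div_add_mod]
      rcases hr' with h3 | h3
      · exfalso
        apply hvu
        apply Fin.ext
        rw [e, h3, Nat.div_add_mod]
      · rw [e]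
        exact h3
    · have h3 := hoff v h1
      have h4 : 2 ^ h ≤ offs M (u.val % M) v.val := by
        by_contra hc
        exact hv' (Or.inr ⟨h2, h3, by omega⟩)
      have hvM := offs_lt (v := v.val) hx
      obtain ⟨w, hw, hw'⟩ := offs_surj (o := offs M (u.val % M) v.val - (2 ^ h - 1)) hx (by omega)
      have h6 : offs M (u.val % M) v.val = offs M (u.val % M) w + (2 ^ h - 1) := by omega
      have hwA : (⟨w, by omega⟩ : Fin n) ∈ phaseA M u h :=
        Or.inr ⟨hw, by simp only; omega, by simp only; omega⟩
      refine ⟨⟨w, by omega⟩, hwA, Or.inr ⟨?_, h1, h6⟩, bGraph_adj ?_ (Or.inl ?_)⟩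
      · intro e
        have := hoff' ⟨w, by omega⟩ (by simp only; omega)
        rw [e] at this
        exact this rfl
      · intro e
        rw [e] at hwA
        exact hv' hwA
      · rw [offs_shift hx h2 h6]
        exact mem_outSet_last hw
  · intro w _ v hv hv1 v' hv' hv1' h1 h2
    have hvu : v ≠ u := fun e => hv1 (Or.inl e)
    have hvu' : v' ≠ u := fun e => hv1' (Or.inl e)
    rcases h1 with ⟨h1, h3⟩ | ⟨h1, h3, h4⟩
    · rcases h2 with ⟨_, h3'⟩ | ⟨h1', _⟩
      · rcases hC v hv hvu with ⟨_, h5⟩ | ⟨h5, _⟩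
        · rcases hC v' hv' hvu' with ⟨_, h5'⟩ | ⟨h5', _⟩
          · apply Fin.ext
            rw [← Nat.div_add_mod v.val M, ← Nat.div_add_mod v'.val M, h5, h5', h3, h3']
          · exact absurd h3' h5'
        · exact absurd h3 h5
      · exact absurd h1 h1'
    · rcases h2 with ⟨h1', _⟩ | ⟨_, h3', h4'⟩
      · exact absurd h1' h1
      · rcases hC v hv hvu with ⟨h5, _⟩ | ⟨_, h5⟩
        · exact absurd h5 h3
        rcases hC v' hv' hvu' with ⟨h5', _⟩ | ⟨_, h5'⟩
        · exact absurd h5' h3'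
        exact Fin.ext (offs_inj hx h5 h5' (by omega))

lemma stepC {h a q M n r : ℕ} (hM0 : 0 < M) (hqa : q ≤ a)
    (hMn : M * 2 ^ q ≤ n) (hnM : n ≤ M * 2 ^ a) (u : Fin n) (hr : r < 2 ^ q) (i : ℕ) :
    BStep (bGraph h a q M n) (phaseC M r u i) (phaseC M r u (i + 1)) := by
  refine ⟨?_, fun w v => w.val % M = v.val % M ∧ w.val / M = (v.val / M) ^^^ 2 ^ i, ?_, ?_⟩
  · intro v hv
    rcases hv with hv | hv
    · exact Or.inl hv
    · exact Or.inr (hv.trans (Nat.pow_lt_pow_right (by norm_num) (Nat.lt_succ_self i)))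
  · intro v hv hv'
    have hvu : v ≠ u := fun e => hv' (Or.inl e)
    have h1 : ((v.val / M) ^^^ rel M u.val r v.val) < 2 ^ (i + 1) := by
      rcases hv with hv | hv
      · exact absurd hv hvu
      · exact hv
    have h2 : 2 ^ i ≤ ((v.val / M) ^^^ rel M u.val r v.val) := by
      by_contra hc
      exact hv' (Or.inr (not_le.1 hc))
    have hs : rel M u.val r v.val < 2 ^ q := by
      unfold rel
      split_ifs
      · exact hr
      · positivity
    have he : v.val / M < 2 ^ a := Nat.div_lt_of_lt_mul (v.2.trans_le hnM)
    have hia : i < a := by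
      by_contra hc
      have e1 := Nat.xor_lt_two_pow he (hs.trans_le (Nat.pow_le_pow_right (by norm_num) hqa))
      have e2 : 2 ^ a ≤ 2 ^ i := Nat.pow_le_pow_right (by norm_num) (not_lt.1 hc)
      omega
    have hcM : v.val % M < M := Nat.mod_lt _ hM0
    obtain ⟨h3, h4⟩ := xor_two_pow_of_ge h2 h1
    -- the caller
    have key : ((v.val / M) ^^^ 2 ^ i) ^^^ rel M u.val r v.val < 2 ^ i := by
      rw [Nat.xor_assoc, Nat.xor_comm (2 ^ i), ← Nat.xor_assoc, h3]
      rw [pow_succ] at h1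
      omega
    have hcases : (v.val / M < 2 ^ q ∧ (v.val / M) ^^^ 2 ^ i < 2 ^ q) ∨
        ((v.val / M).testBit i = true ∧ v.val / M < 2 ^ (i + 1) ∧
          (v.val / M) ^^^ 2 ^ i ≤ v.val / M) := by
      rcases lt_or_ge i q with hiq | hiq
      · left
        have e1 : (v.val / M) < 2 ^ q := by
          have e2 := Nat.xor_lt_two_pow
            (h1.trans_le (Nat.pow_le_pow_right (by norm_num) hiq)) hs
          rwa [Nat.xor_assoc, Nat.xor_self, Nat.xor_zero] at e2
        exact ⟨e1, Nat.xor_lt_two_pow e1 (Nat.pow_lt_pow_right (by norm_num) hiq)⟩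
      · right
        have hsi : rel M u.val r v.val < 2 ^ i :=
          hs.trans_le (Nat.pow_le_pow_right (by norm_num) hiq)
        have e1 : (v.val / M) < 2 ^ (i + 1) := by
          have e2 := Nat.xor_lt_two_pow h1
            (hsi.trans (Nat.pow_lt_pow_right (by norm_num) (Nat.lt_succ_self i)))
          rwa [Nat.xor_assoc, Nat.xor_self, Nat.xor_zero] at e2
        have e3 : (v.val / M).testBit i = true := by
          rw [Nat.testBit_xor, Nat.testBit_lt_two_pow hsi] at h4
          simpa using h4
        refine ⟨e3, e1, ?_⟩
        rw [(xor_two_pow_of_ge (Nat.ge_two_pow_of_testBit e3) e1).1]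
        exact Nat.sub_le _ _
    have hwn : M * ((v.val / M) ^^^ 2 ^ i) + v.val % M < n := by
      rcases hcases with ⟨_, e1⟩ | ⟨_, _, e1⟩
      · have e2 : M * (((v.val / M) ^^^ 2 ^ i) + 1) ≤ M * 2 ^ q := Nat.mul_le_mul_left _ e1
        rw [Nat.mul_add] at e2
        omega
      · have e2 := Nat.mul_le_mul_left M e1
        have e3 := Nat.div_add_mod v.val M
        have e4 := v.2
        omega
    have hwd : (M * ((v.val / M) ^^^ 2 ^ i) + v.val % M) / M = (v.val / M) ^^^ 2 ^ i := by
      rw [Nat.mul_add_div hM0, Nat.div_eq_of_lt hcM, add_zero]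
    have hwm : (M * ((v.val / M) ^^^ 2 ^ i) + v.val % M) % M = v.val % M := by
      rw [Nat.mul_add_mod, Nat.mod_mod]
    have hwC : (⟨_, hwn⟩ : Fin n) ∈ phaseC M r u i := by
      right
      unfold rel at key ⊢
      simp only [hwd, hwm]
      exact key
    refine ⟨⟨_, hwn⟩, hwC, ⟨hwm, hwd⟩, bGraph_adj ?_ ?_⟩
    · intro e
      rw [e] at hwC
      exact hv' hwC
    · simp only
      by_cases hb : (v.val / M).testBit i = true
      · right
        refine mem_outSet_bit hia hb ?_
        rcases hcases with ⟨e1, _⟩ | ⟨_, e1, _⟩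
        · exact Or.inl e1
        · exact Or.inr e1
      · left
        rcases hcases with ⟨_, e1⟩ | ⟨e1, _⟩
        · have e2 := mem_outSet_bit (h := h) (q := q) (M := M)
            (v := M * ((v.val / M) ^^^ 2 ^ i) + v.val % M) hia
            (by rw [hwd, Nat.testBit_xor, Nat.testBit_two_pow]; simpa using hb)
            (by rw [hwd]; exact Or.inl e1)
          rwa [hwd, hwm, Nat.xor_assoc, Nat.xor_self, Nat.xor_zero, Nat.div_add_mod] at e2
        · exact absurd e1 hb
  · rintro w _ v hv hv1 v' hv' hv1' ⟨h1, h2⟩ ⟨h3, h4⟩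
    apply Fin.ext
    rw [← Nat.div_add_mod v.val M, ← Nat.div_add_mod v'.val M, ← h1, ← h3,
      Nat.xor_left_injective (h2.symm.trans h4)]

lemma bGraph_protocol {h a q M n : ℕ} (hM : M + 1 = 2 ^ (h + 1)) (hh : 1 ≤ h) (hqa : q ≤ a)
    (hMn : M * 2 ^ q ≤ n) (hnM : n ≤ M * 2 ^ a) (u : Fin n) :
    IsBroadcastProtocol (bGraph h a q M n) u (h + 1 + a) := by
  have hM0 : 0 < M := by
    have : 2 ^ 1 ≤ 2 ^ (h + 1) := Nat.pow_le_pow_right (by norm_num) (by omega)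
    omega
  have hMn' : M ≤ n := (Nat.le_mul_of_pos_right M (by positivity : 0 < 2 ^ q)).trans hMn
  obtain ⟨r, hr, hr'⟩ := exists_relay (h := h) (a := a) (q := q) (u := u.val) hM0
  refine protocol_of_steps (fun j => if j ≤ h then phaseA M u j else phaseC M r u (j - (h + 1)))
    ?_ ?_ ?_
  · ext v
    simp only [Nat.zero_le, if_true, phaseA, Set.mem_ofPred_eq, Set.mem_singleton_iff, pow_zero]
    constructor
    · rintro (hv | hv)
      · exact hv
      · omega
    · exact Or.inl
  · intro j
    rcases lt_trichotomy j h with hj | hj | hj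
    · simp only [if_pos hj.le, if_pos (show j + 1 ≤ h by omega)]
      exact stepA hM hMn' u hj
    · subst hj
      simp only [le_refl, if_true, if_neg (show ¬ (j + 1 ≤ j) by omega), Nat.sub_self]
      exact stepB hM hh hMn u hr hr'
    · simp only [if_neg (show ¬ (j ≤ h) by omega), if_neg (show ¬ (j + 1 ≤ h) by omega)]
      rw [show j + 1 - (h + 1) = (j - (h + 1)) + 1 by omega]
      exact stepC hM0 hqa hMn hnM u hr _
  · simp only [if_neg (show ¬ (h + 1 + a ≤ h) by omega), Nat.add_sub_cancel_left]
    ext v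
    simp only [Set.mem_univ, iff_true]
    right
    refine Nat.xor_lt_two_pow (Nat.div_lt_of_lt_mul (v.2.trans_le hnM)) ?_
    unfold rel
    split_ifs
    · exact hr.trans_le (Nat.pow_le_pow_right (by norm_num) hqa)
    · positivity

/-- The arithmetic comparison of the edge count with the required bound. -/
lemma final_ineq (t k p A P : ℤ) (hp : 0 ≤ p) (hkp : p + 2 ≤ k) (htk : 2 * k + 2 ≤ t)
    (hA : 4 ≤ A) (hP : 1 ≤ P) :
    (2 * t - k + 2 * p + 4) * (A * P) - 2 * (t - k) + 2 * ((p - 2) * P) + 2 * (A - 1) ≤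
      2 * ((A - 1) * (P * (8 * t - 8 * k - 4 * p - 12))) := by
  have hX : 0 ≤ 8 * t - 8 * k - 4 * p - 12 := by linarith
  have h1 : 0 ≤ (A - 4) * (P * (8 * t - 8 * k - 4 * p - 12)) :=
    mul_nonneg (by linarith) (mul_nonneg (by linarith) hX)
  have h2 : 0 ≤ A * P := mul_nonneg (by linarith) (by linarith)
  have h3 : 0 ≤ p * (P * (A - 4)) := mul_nonneg hp (mul_nonneg (by linarith) (by linarith))
  have h4 : 0 ≤ A * (P - 1) := mul_nonneg (by linarith) (by linarith)
  have h5 : 0 ≤ (A * P) * (10 * t - 11 * k - 9 * p - 24) := by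
    apply mul_nonneg h2
    linarith
  nlinarith

lemma edge_ineq (t h p M P Q E n k : ℤ) (hQ : 2 * Q = (M + 1) * P)
    (hfin : (2 * t - k + 2 * p + 4) * ((M + 1) * P) - 2 * (t - k) + 2 * ((p - 2) * P) +
      2 * (M + 1 - 1) ≤ 2 * ((M + 1 - 1) * (P * (8 * t - 8 * k - 4 * p - 12))))
    (hcz : 2 * E + 2 * (M * (P * 8) * (2 + (t - k - 2))) ≤
      2 * (h + 2) * n + 2 * M + M * (p + 3) * (P * 8)) (hk : k = h + p + 1 := by rfl) :
    E ≤ (k + 1 - p) * n - (2 * t - k + 2 * p + 4) * Q + t - k - (p - 2) * P := by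
  rw [← hQ] at hfin
  have e : (k + 1 - p) * n = (h + 2) * n := by rw [hk]; ring
  rw [e]
  linarith

lemma choose_ineq (t h p M P Q n C : ℤ) (hh : 0 ≤ h) (hp : 0 ≤ p)
    (htk : 2 * (h + p + 1) + 2 ≤ t) (hM : 3 ≤ M) (hP : 1 ≤ P)
    (hQ : 2 * Q = (M + 1) * P) (hC : 2 * C = n * (n - 1)) (hn : 2 * t + 2 ≤ n) :
    (h + p + 1 + 1 - p) * n - (2 * t - (h + p + 1) + 2 * p + 4) * Q + t - (h + p + 1) -
      (p - 2) * P ≤ C := by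
  have h1 : 2 * P ≤ Q := by nlinarith
  have h2 : (2 * t - (h + p + 1) + 2 * p + 4) * (2 * P) ≤
      (2 * t - (h + p + 1) + 2 * p + 4) * Q := mul_le_mul_of_nonneg_left h1 (by linarith)
  have h3 : 0 ≤ n * (n - 1 - 2 * (h + 2)) := mul_nonneg (by linarith) (by linarith)
  have h4 : 0 ≤ (2 * t - (h + p + 1) + 2 * p + 4) * (P - 1) :=
    mul_nonneg (by linarith) (by linarith)
  have h5 : 0 ≤ p * P := mul_nonneg hp (by linarith)
  have h6 : 0 ≤ (2 * t - (h + p + 1) + 2 * p) * (P - 1) :=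
    mul_nonneg (by linarith) (by linarith)
  linarith

/-- For `t ≥ 7`, `2 ≤ k ≤ ⌊t/2⌋ - 1`, `N = (2^k - 1)·2^(t+1-k)` and `2^t < n < N`, with
`d = N - n`, `x = ⌊d / 2^(t+1-k)⌋` and `p = ⌊log₂ (x+1)⌋` if `x > 0` (and `p = 0` if `x = 0`),
there is a connected graph on `n` vertices with exactly
`(k+1-p)·n - (2t - k + 2p + 4)·2^(k-1) + t - k - (p-2)·2^p` edges in which every vertex
has broadcast time at most `t + 1`. -/
theorem exists_broadcast_graph_of_n (t k n N d x p : ℕ) (ht : 7 ≤ t) (hk : 2 ≤ k)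
    (hk' : k ≤ t / 2 - 1) (hN : N = (2 ^ k - 1) * 2 ^ (t + 1 - k))
    (hn1 : 2 ^ t < n) (hn2 : n < N)
    (hd : d = N - n) (hx : x = d / 2 ^ (t + 1 - k))
    (hp : p = if 0 < x then Nat.log 2 (x + 1) else 0) :
    ∃ G : SimpleGraph (Fin n), G.Connected ∧
      (G.edgeSet.ncard : ℤ) =
        (k + 1 - p) * n - (2 * t - k + 2 * p + 4) * 2 ^ (k - 1) + t - k - (p - 2) * 2 ^ p ∧
      ∀ u, broadcastTime G u ≤ t + 1 := by
  have hp2 : 2 ^ p ≤ x + 1 ∧ x + 1 < 2 ^ (p + 1) := by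
    rw [hp]
    split_ifs with h0
    · exact ⟨Nat.pow_log_le_self 2 (by omega), Nat.lt_pow_succ_log_self (by norm_num) _⟩
    · have : x = 0 := by omega
      subst this
      norm_num
  clear hp
  obtain ⟨m, hm⟩ : ∃ m, t + 1 = k + m := ⟨t + 1 - k, by omega⟩
  rw [show t + 1 - k = m by omega] at hN hx
  have hTpos : 0 < 2 ^ m := by positivity
  have hx1 : x * 2 ^ m ≤ d := by rw [hx]; exact Nat.div_mul_le_self _ _
  have hx2 : d < (x + 1) * 2 ^ m := by
    rw [hx, mul_comm]; exact Nat.lt_mul_div_succ d hTpos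
  obtain ⟨k1, rfl⟩ : ∃ k1, k = k1 + 1 := ⟨k - 1, by omega⟩
  have hk1 : 1 ≤ 2 ^ k1 := Nat.one_le_two_pow
  have hNd : n + d = N := by omega
  have h2k : 2 ^ (k1 + 1) = 2 ^ k1 + 2 ^ k1 := by ring
  have hN' : N + 2 ^ m = 2 ^ (k1 + 1) * 2 ^ m := by
    rw [hN, ← Nat.succ_mul]
    congr 1
    omega
  have h2t : 2 ^ t = 2 ^ k1 * 2 ^ m := by
    rw [← pow_add]; congr 1; omega
  -- `p ≤ k - 2`
  have hpk : p < k1 := by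
    have h1 : (x + 1) * 2 ^ m < 2 ^ k1 * 2 ^ m := by
      rw [h2k, Nat.add_mul] at hN'
      rw [Nat.succ_mul]
      omega
    have h2 : x + 1 < 2 ^ k1 := lt_of_mul_lt_mul_right h1 (Nat.zero_le _)
    exact (Nat.pow_lt_pow_iff_right (by norm_num)).1 (hp2.1.trans_lt h2)
  obtain ⟨h, rfl⟩ : ∃ h, k1 = h + p := ⟨k1 - p, by omega⟩
  have hh : 1 ≤ h := by omega
  obtain ⟨M, hM⟩ : ∃ M, M + 1 = 2 ^ (h + 1) := ⟨2 ^ (h + 1) - 1, by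
    have : 1 ≤ 2 ^ (h + 1) := Nat.one_le_two_pow
    omega⟩
  have hM3 : 3 ≤ M := by
    have : 2 ^ 2 ≤ 2 ^ (h + 1) := Nat.pow_le_pow_right (by norm_num) (by omega)
    omega
  have hkP : 2 ^ (h + p + 1) = (M + 1) * 2 ^ p := by
    rw [hM, ← pow_add]; congr 1; omega
  have ha : 2 ^ (m + p) = 2 ^ p * 2 ^ m := by rw [← pow_add]; congr 1; omega
  have hNa : N + 2 ^ m = M * 2 ^ (m + p) + 2 ^ (m + p) := by
    rw [hN', hkP, ha]; ring
  have hnM : n ≤ M * 2 ^ (m + p) := by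
    have h1 : 2 ^ p * 2 ^ m ≤ (x + 1) * 2 ^ m := Nat.mul_le_mul_right _ hp2.1
    rw [Nat.succ_mul, ← ha] at h1
    omega
  have hnlow : M * 2 ^ (m + p) < n + 2 ^ (m + p) := by
    have h1 : (x + 1 + 1) * 2 ^ m ≤ 2 ^ (p + 1) * 2 ^ m := Nat.mul_le_mul_right _ hp2.2
    have h2 : 2 ^ (p + 1) * 2 ^ m = 2 ^ (m + p) + 2 ^ (m + p) := by rw [ha]; ring
    rw [h2, Nat.succ_mul] at h1
    omega
  have hm6 : 6 ≤ m := by omega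
  have hlow : M * (2 ^ (m + p - 1) + 2 ^ (p + 3)) ≤ n := by
    obtain ⟨c, rfl⟩ : ∃ c, m = c + 6 := ⟨m - 6, by omega⟩
    have e1 : 2 ^ (c + 6 + p) = 8 * (2 ^ c * 2 ^ (p + 3)) := by
      rw [← pow_add, show (8 : ℕ) = 2 ^ 3 by norm_num, ← pow_add]; congr 1; omega
    have e2 : 2 ^ (c + 6 + p - 1) = 4 * (2 ^ c * 2 ^ (p + 3)) := by
      rw [← pow_add, show (4 : ℕ) = 2 ^ 2 by norm_num, ← pow_add]; congr 1; omega
    have e3 : 2 ^ (p + 3) ≤ 2 ^ c * 2 ^ (p + 3) := Nat.le_mul_of_pos_left _ (by positivity)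
    rw [e1] at hnlow
    rw [e2]
    generalize 2 ^ c * 2 ^ (p + 3) = Y at *
    have e4 : M * (4 * Y + 2 ^ (p + 3)) ≤ M * (5 * Y) := Nat.mul_le_mul_left _ (by omega)
    have e5 : 3 * Y ≤ M * Y := Nat.mul_le_mul_right _ hM3
    have e6 : M * (5 * Y) = 5 * (M * Y) := by ring
    have e7 : M * (8 * Y) = 8 * (M * Y) := by ring
    omega
  have hq : M * 2 ^ (p + 3) ≤ n :=
    (Nat.mul_le_mul_left _ (Nat.le_add_left _ _)).trans hlow
  have hprot : ∀ u, IsBroadcastProtocol (bGraph h (m + p) (p + 3) M n) u (t + 1) := by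
    intro u
    have := bGraph_protocol (a := m + p) hM hh (by omega) hq hnM u
    rwa [show h + 1 + (m + p) = t + 1 by omega] at this
  have hcount := sum_outSet (h := h) (a := m + p) (q := p + 3) (by omega : 0 < M) (by omega) hlow
  have hcard := bGraph_card_le h (m + p) (p + 3) M n
  set E := (bGraph h (m + p) (p + 3) M n).edgeSet.ncard with hE
  obtain ⟨b, hb⟩ : ∃ b, m = b + 3 := ⟨m - 3, by omega⟩
  rw [show m + p - (p + 3) = b by omega] at hcount
  have hcount' : 2 * E + 2 * (M * 2 ^ (p + 3) * (2 + b)) ≤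
      2 * (h + 2) * n + 2 * M + M * (p + 3) * 2 ^ (p + 3) := by omega
  have hP1 : (1 : ℤ) ≤ 2 ^ p := by exact_mod_cast Nat.one_le_two_pow
  have hAP : (2 : ℤ) * 2 ^ (h + p + 1 - 1) = (M + 1) * 2 ^ p := by
    rw [Nat.add_sub_cancel]
    have : 2 * 2 ^ (h + p) = (M + 1) * 2 ^ p := by rw [← hkP]; ring
    exact_mod_cast this
  have hbz : (b : ℤ) = t - (h + p + 1) - 2 := by omega
  have hfin := final_ineq t (h + p + 1) p (M + 1) (2 ^ p) (by positivity) (by omega) (by omega)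
    (by omega) hP1
  have hcz : (2 * E + 2 * (M * (2 ^ p * 8) * (2 + b)) : ℤ) ≤
      2 * (h + 2) * n + 2 * M + M * (p + 3) * (2 ^ p * 8) := by
    rw [pow_add] at hcount'
    exact_mod_cast hcount'
  rw [hbz] at hcz
  push_cast
  have hEm : (E : ℤ) ≤ ((h + p + 1 : ℤ) + 1 - p) * n -
      (2 * t - (h + p + 1) + 2 * p + 4) * 2 ^ (h + p + 1 - 1) + t - (h + p + 1) -
        (p - 2) * 2 ^ p :=
    edge_ineq _ _ _ _ _ _ _ _ _ hAP hfin hcz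
  have hmle : ((h + p + 1 : ℤ) + 1 - p) * n -
      (2 * t - (h + p + 1) + 2 * p + 4) * 2 ^ (h + p + 1 - 1) + t - (h + p + 1) -
        (p - 2) * 2 ^ p ≤ n.choose 2 := by
    have h1 : 2 * ((n.choose 2 : ℕ) : ℤ) = n * (n - 1) := by
      have := Nat.choose_two_right n
      have h3 : 2 * n.choose 2 = n * (n - 1) := by
        rw [this]
        exact Nat.mul_div_cancel' (Nat.even_mul_pred_self n).two_dvd
      have h4 : ((n - 1 : ℕ) : ℤ) = n - 1 := by push_cast [show 1 ≤ n by omega]; ring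
      rw [← h4]
      exact_mod_cast h3
    have h2 : (2 * t + 2 : ℤ) ≤ n := by
      obtain ⟨c, rfl⟩ : ∃ c, t = c + 4 := ⟨t - 4, by omega⟩
      have := Nat.lt_two_pow_self (n := c)
      rw [pow_add] at hn1
      omega
    exact choose_ineq _ _ _ _ _ _ _ _ (by positivity) (by positivity) (by omega) (by omega) hP1
      hAP h1 h2
  obtain ⟨mm, hmm⟩ := Int.eq_ofNat_of_zero_le ((Int.natCast_nonneg E).trans hEm)
  rw [hmm] at hEm hmle
  rw [Nat.add_sub_cancel] at hmm
  rw [hmm]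
  obtain ⟨G', hG1, hG2, hG3⟩ := exists_padded (m := mm) (by omega : 0 < n) _ hprot
    (by exact_mod_cast hEm) (by exact_mod_cast hmle)
  exact ⟨G', hG1, by rw [hG2], hG3⟩
end

section
/- Let n be an even positive integer such that m = ⌈log₂ n⌉ > 2 is prime, m ≠ 2^j − 1 for every integer j, m divides n, and for every integer d ≠ m − 1 that divides m − 1 one has 2^d ≢ 1 (mod m). Then the broadcast function satisfies B(n+1) ≤ (n·⌊log₂ n⌋)/2 + n/⌈log₂ n⌉ + ⌈log₂ n⌉ − 2. -/
namespace Bcast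

theorem mk_protocol {V : Type*} (G : SimpleGraph V) (u : V) (b : ℕ) (I : ℕ → Set V)
    (h0 : I 0 = {u}) (hmono : ∀ i, I i ⊆ I (i + 1)) (hb : I b = Set.univ)
    (hg : ∀ i, i < b → ∃ g : V → V, (∀ v, v ∈ I (i+1) → v ∉ I i → g v ∈ I i ∧ G.Adj (g v) v) ∧
      (∀ v w, v ∈ I (i+1) → v ∉ I i → w ∈ I (i+1) → w ∉ I i → g v = g w → v = w)) :
    IsBroadcastProtocol G u b := by
  refine ⟨I, h0, hmono, hb, fun i => ?_⟩
  by_cases hi : i < b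
  · obtain ⟨g, h1, h2⟩ := hg i hi
    refine ⟨fun v => ⟨g v.1, (h1 v.1 v.2.1 v.2.2).1⟩, ?_, fun v => (h1 v.1 v.2.1 v.2.2).2⟩
    intro v w hvw
    exact Subtype.ext (h2 _ _ v.2.1 v.2.2 w.2.1 w.2.2 (congrArg Subtype.val hvw))
  · have hm : Monotone I := monotone_nat_of_le_succ hmono
    have hu : I i = Set.univ := Set.eq_univ_of_univ_subset (hb ▸ hm (not_lt.1 hi))
    have : IsEmpty (I (i + 1) \ I i : Set V) := ⟨fun v => v.2.2 (Set.eq_univ_iff_forall.1 hu v.1)⟩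
    exact ⟨fun v => isEmptyElim v, fun v => isEmptyElim v, fun v => isEmptyElim v⟩

theorem reachable_of_protocol {V : Type*} {G : SimpleGraph V} {u : V} {b : ℕ}
    (h : IsBroadcastProtocol G u b) (v : V) : G.Reachable u v := by
  obtain ⟨I, h0, _, hb, hf⟩ := h
  have key : ∀ i, ∀ v ∈ I i, G.Reachable u v := by
    intro i
    induction i with
    | zero => intro v hv; rw [h0] at hv; rw [Set.mem_singleton_iff.1 hv]
    | succ i ih =>
      intro v hv
      by_cases hi : v ∈ I i
      · exact ih v hi
      · obtain ⟨f, _, hadj⟩ := hf i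
        exact (ih _ (f ⟨v, hv, hi⟩).2).trans (hadj ⟨v, hv, hi⟩).reachable
  exact key b v (by rw [hb]; trivial)

theorem protocol_iso {V W : Type*} {G : SimpleGraph V} {H : SimpleGraph W} (e : G ≃g H)
    {u : V} {b : ℕ} (h : IsBroadcastProtocol G u b) : IsBroadcastProtocol H (e u) b := by
  obtain ⟨I, h0, hm, hb, hf⟩ := h
  refine ⟨fun i => {w | e.symm w ∈ I i}, ?_, fun i w hw => hm i hw, ?_, fun i => ?_⟩
  · ext w
    simp only [h0, Set.mem_setOf_eq, Set.mem_singleton_iff]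
    constructor
    · rintro rfl; simp
    · rintro rfl; simp
  · ext w; simp [hb]
  · obtain ⟨f, hinj, hadj⟩ := hf i
    refine ⟨fun v => ⟨e (f ⟨e.symm v.1, v.2.1, v.2.2⟩).1, ?_⟩, ?_, ?_⟩
    · simp
    · intro v w hvw
      have h1 := e.injective (congrArg Subtype.val hvw)
      have h2 := hinj (Subtype.ext h1)
      have h3 := congrArg Subtype.val h2
      exact Subtype.ext (e.symm.injective h3)
    · intro v
      have h1 := hadj ⟨e.symm v.1, v.2.1, v.2.2⟩
      have h2 := e.map_adj_iff.2 h1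
      simpa using h2

/-- relation generating the graph -/
def rel {W : Type*} (π : ℕ → W → W) (d : ℕ) (S : Set W) : Option W → Option W → Prop
  | some a, some b => ∃ k < d, b = π k a
  | none, some b => b ∈ S
  | _, none => False

/-- The base graph plus an apex joined to `S`. -/
def bg {W : Type*} (π : ℕ → W → W) (d : ℕ) (S : Set W) : SimpleGraph (Option W) :=
  SimpleGraph.fromRel (rel π d S)

/-- informed set -/
def inf {W : Type*} (π : ℕ → W → W) (a : ℕ → ℕ) (w : W) : ℕ → Set W
  | 0 => {w}
  | i + 1 => {p | p ∈ inf π a w i ∨ π (a i) p ∈ inf π a w i}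

section
variable {W : Type*} (π : ℕ → W → W) (hinv : ∀ k p, π k (π k p) = p) (hne : ∀ k p, π k p ≠ p)

theorem inf_mono (a : ℕ → ℕ) (w : W) : Monotone (inf π a w) :=
  monotone_nat_of_le_succ fun _ _ hp => Or.inl hp

include hinv hne in
theorem adj_some (d : ℕ) (S : Set W) (k : ℕ) (hk : k < d) (p : W) :
    (bg π d S).Adj (some (π k p)) (some p) := by
  refine (SimpleGraph.fromRel_adj _ _ _).2 ⟨fun h => hne k p (Option.some.inj h), Or.inr ⟨k, hk, rfl⟩⟩

theorem adj_none (d : ℕ) (S : Set W) (p : W) (hp : p ∈ S) :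
    (bg π d S).Adj none (some p) :=
  (SimpleGraph.fromRel_adj _ _ _).2 ⟨by simp, Or.inl hp⟩

include hinv hne in
theorem protocol_some (d : ℕ) (hd : 0 < d) (S : Set W) (a : ℕ → ℕ) (ha : ∀ i, a i < d)
    (had : a d = a 0) (w x : W) (hx : x ∈ S) (hwx : x = w ∨ x = π (a 0) w)
    (hall : inf π a w (d + 1) = Set.univ) :
    IsBroadcastProtocol (bg π d S) (some w) (d + 1) := by
  have h1 : inf π a w 1 ⊆ inf π a w d := inf_mono π a w hd
  have hw1 : w ∈ inf π a w 1 := Or.inl rfl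
  have hw2 : π (a 0) w ∈ inf π a w 1 := Or.inr (hinv _ _)
  have hxd : x ∈ inf π a w d := by rcases hwx with rfl | rfl; exacts [h1 hw1, h1 hw2]
  have hxd' : π (a 0) x ∈ inf π a w d := by
    rcases hwx with rfl | rfl
    · exact h1 hw2
    · rw [hinv]; exact h1 hw1
  refine mk_protocol _ _ _ (fun i => {p | (∃ q ∈ inf π a w i, p = some q) ∨ d < i}) ?_ ?_ ?_ ?_
  · ext p; simp [inf]
  · rintro i p (⟨q, hq, rfl⟩ | h)
    · exact Or.inl ⟨q, inf_mono π a w (Nat.le_succ i) hq, rfl⟩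
    · exact Or.inr (by omega)
  · ext p; simp
  · intro i hi
    have hs : ∀ y : W, some y ∈ {p | (∃ q ∈ inf π a w (i+1), p = some q) ∨ d < i+1} →
        some y ∉ {p | (∃ q ∈ inf π a w i, p = some q) ∨ d < i} → y ∉ inf π a w i ∧
          π (a i) y ∈ inf π a w i := by
      intro y hy hy'
      have h2 : y ∉ inf π a w i := fun h => hy' (Or.inl ⟨y, h, rfl⟩)
      refine ⟨h2, ?_⟩
      have h3 : y ∈ inf π a w (i+1) := by
        rcases hy with ⟨q, hq, he⟩ | h
        · exact (Option.some.inj he) ▸ hq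
        · have : i = d := by omega
          subst this; rw [hall]; trivial
      exact h3.resolve_left h2
    have hn : none ∈ {p : Option W | (∃ q ∈ inf π a w (i+1), p = some q) ∨ d < i+1} → i = d := by
      rintro (⟨q, _, h⟩ | h)
      · cases h
      · omega
    refine ⟨fun p => match p with | none => some x | some y => some (π (a i) y), ?_, ?_⟩
    · rintro (_ | y) hy hy'
      · have := hn hy; subst this
        exact ⟨Or.inl ⟨x, hxd, rfl⟩, (adj_none π _ S x hx).symm⟩
      · exact ⟨Or.inl ⟨_, (hs y hy hy').2, rfl⟩, adj_some π hinv hne d S _ (ha i) y⟩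
    · have aux : ∀ y : W, some y ∈ {p | (∃ q ∈ inf π a w (i+1), p = some q) ∨ d < i+1} →
        some y ∉ {p | (∃ q ∈ inf π a w i, p = some q) ∨ d < i} → i = d → π (a i) y = x → False := by
        rintro y hy hy' rfl h
        apply (hs y hy hy').1
        rw [← hinv (a i) y, h, had]; exact hxd'
      rintro (_ | y) (_ | z) hy hy' hz hz' h
      · rfl
      · exact (aux z hz hz' (hn hy) (Option.some.inj h).symm).elim
      · exact (aux y hy hy' (hn hz) (Option.some.inj h)).elim
      · have := congrArg (π (a i)) (Option.some.inj h)
        rw [hinv, hinv] at this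
        rw [this]

include hinv hne in
theorem protocol_none (d : ℕ) (hd : 0 < d) (S : Set W) (a : ℕ → ℕ) (ha : ∀ i, a i < d)
    (had : a d = a 0) (u : W) (hu : ∀ k < d, π k u ∈ S)
    (hall : inf π a u (d + 1) = Set.univ) :
    IsBroadcastProtocol (bg π d S) none (d + 1) := by
  classical
  have h1 : inf π a u 1 ⊆ inf π a u d := inf_mono π a u hd
  have hw2 : π (a 0) u ∈ inf π a u d := h1 (Or.inr (hinv _ _))
  have hui : ∀ i, u ∈ inf π a u i := fun i => inf_mono π a u (Nat.zero_le i) rfl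
  refine mk_protocol _ _ _
    (fun i => {p | p = none ∨ (∃ q ∈ inf π a u i, q ≠ u ∧ p = some q) ∨ d < i}) ?_ ?_ ?_ ?_
  · ext p; simp [inf]
  · rintro i p (h | ⟨q, hq, hqu, rfl⟩ | h)
    · exact Or.inl h
    · exact Or.inr (Or.inl ⟨q, inf_mono π a u (Nat.le_succ i) hq, hqu, rfl⟩)
    · exact Or.inr (Or.inr (by omega))
  · ext p; simp
  · intro i hi
    have hs : ∀ p, p ∈ {p | p = none ∨ (∃ q ∈ inf π a u (i+1), q ≠ u ∧ p = some q) ∨ d < i+1} →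
        p ∉ {p | p = none ∨ (∃ q ∈ inf π a u i, q ≠ u ∧ p = some q) ∨ d < i} →
        ∃ y, p = some y ∧ π (a i) y ∈ inf π a u i := by
      intro p hp hp'
      rcases p with _ | y
      · exact (hp' (Or.inl rfl)).elim
      refine ⟨y, rfl, ?_⟩
      by_cases hyu : y = u
      · subst hyu
        rcases hp with h | ⟨q, _, hq, h⟩ | h
        · cases h
        · exact (hq (Option.some.inj h).symm).elim
        · have : i = d := by omega
          subst this; rw [had]; exact hw2
      · have h2 : y ∉ inf π a u i := fun h => hp' (Or.inr (Or.inl ⟨y, h, hyu, rfl⟩))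
        have h3 : y ∈ inf π a u (i+1) := by
          rcases hp with h | ⟨q, hq, _, he⟩ | h
          · cases h
          · exact (Option.some.inj he) ▸ hq
          · have : i = d := by omega
            subst this; rw [hall]; trivial
        exact h3.resolve_left h2
    refine ⟨fun p => match p with
      | none => none
      | some y => if π (a i) y = u then none else some (π (a i) y), ?_, ?_⟩
    · intro p hp hp'
      obtain ⟨y, rfl, hy⟩ := hs p hp hp'
      dsimp only
      split_ifs with h
      · refine ⟨Or.inl rfl, adj_none π _ S y ?_⟩
        rw [← hinv (a i) y, h]; exact hu _ (ha i)
      · exact ⟨Or.inr (Or.inl ⟨_, hy, h, rfl⟩), adj_some π hinv hne d S _ (ha i) y⟩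
    · intro p q hp hp' hq hq' h
      obtain ⟨y, rfl, hy⟩ := hs p hp hp'
      obtain ⟨z, rfl, hz⟩ := hs q hq hq'
      have : π (a i) y = π (a i) z := by
        dsimp only at h
        split_ifs at h with h1 h2 h2
        · rw [h1, h2]
        · exact Option.some.inj h
      have := congrArg (π (a i)) this
      rw [hinv, hinv] at this
      rw [this]

end

/-- sign -/
def sg : Bool → ℤ
  | false => 1
  | true => -1

theorem sg_not (c : Bool) : sg (!c) = - sg c := by cases c <;> rfl
theorem sg_mul (c : Bool) : sg c * sg c = 1 := by cases c <;> rfl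

/-- Knödel dimension `a` matching. -/
def kn (N : ℕ) (a : ℕ) (p : Bool × ZMod N) : Bool × ZMod N :=
  (!p.1, p.2 + ((sg p.1 * 2 ^ a : ℤ) : ZMod N))

theorem kn_inv (N k : ℕ) (p : Bool × ZMod N) : kn N k (kn N k p) = p := by
  obtain ⟨c, z⟩ := p
  simp [kn, sg_not]

theorem kn_ne (N k : ℕ) (p : Bool × ZMod N) : kn N k p ≠ p := by
  obtain ⟨c, z⟩ := p
  simp [kn]

theorem phase (N : ℕ) (a : ℕ → ℕ) (w : Bool × ZMod N) (i0 a0 : ℕ) (c : Bool) (z : ZMod N)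
    (h0 : (c, z) ∈ inf (kn N) a w i0) (t : ℕ) (ha : ∀ i ≤ t, a (i0 + i) = a0 + i) :
    (∀ l : ℤ, 0 ≤ l → l < 2 ^ t →
      (c, z + ((- sg c * 2 ^ a0 * l : ℤ) : ZMod N)) ∈ inf (kn N) a w (i0 + t + 1)) ∧
    (∀ l : ℤ, 1 ≤ l → l ≤ 2 ^ t →
      (!c, z + ((sg c * 2 ^ a0 * l : ℤ) : ZMod N)) ∈ inf (kn N) a w (i0 + t + 1)) := by
  induction t with
  | zero =>
    have h1 := ha 0 le_rfl
    simp only [add_zero] at h1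
    constructor
    · intro l hl hl'
      have : l = 0 := by simp at hl'; omega
      subst this
      left; simpa using h0
    · intro l hl hl'
      have : l = 1 := by simp at hl'; omega
      subst this
      right
      simp only [add_zero, h1]
      convert h0 using 1
      simp [kn, sg_not]
  | succ t ih =>
    obtain ⟨ih1, ih2⟩ := ih (fun i hi => ha i (by omega))
    have h1 := ha (t + 1) le_rfl
    have hp : (2:ℤ) ^ (t+1) = 2 * 2 ^ t := by ring
    have hpp : (2:ℤ) ^ (a0 + (t+1)) = 2^a0 * (2 ^ (t+1)) := by ring
    constructor
    · intro l hl hl'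
      by_cases hlt : l < 2 ^ t
      · exact Or.inl (ih1 l hl hlt)
      · right
        have := ih2 (2 ^ (t+1) - l) (by omega) (by omega)
        rw [← add_assoc] at h1
        rw [show i0 + (t + 1) = i0 + t + 1 by ring, h1]
        convert this using 1
        simp only [kn, hpp]
        congr 1
        rw [add_assoc, ← Int.cast_add]
        congr 2
        ring
    · intro l hl hl'
      by_cases hlt : l ≤ 2 ^ t
      · exact Or.inl (ih2 l hl hlt)
      · right
        have := ih1 (2 ^ (t+1) - l) (by omega) (by omega)
        rw [← add_assoc] at h1
        rw [show i0 + (t + 1) = i0 + t + 1 by ring, h1]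
        convert this using 1
        simp only [kn, hpp, Bool.not_not, sg_not]
        congr 1
        rw [add_assoc, ← Int.cast_add]
        congr 2
        ring

theorem inf_all (N : ℕ) [NeZero N] (d k : ℕ) (hk : k < d) (hN : N < 2 ^ d)
    (w : Bool × ZMod N) :
    inf (kn N) (fun i => (k + i) % d) w (d + 1) = Set.univ := by
  obtain ⟨c, z⟩ := w
  set a : ℕ → ℕ := fun i => (k + i) % d with ha
  obtain ⟨s, rfl⟩ : ∃ s, d = k + s + 1 := ⟨d - k - 1, by omega⟩
  have had : a (k + s + 1) = k := by simp [ha, Nat.mod_eq_of_lt hk]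
  obtain ⟨A1, A2⟩ := phase N a (c, z) 0 k c z rfl s
    (fun i hi => by simp only [ha, zero_add]; exact Nat.mod_eq_of_lt (by omega))
  have key : ∀ y : ℤ, -2 ^ (k + s) < y → y < 2 ^ (k + s) →
      (c, z + ((sg c * y : ℤ) : ZMod N)) ∈ inf (kn N) a (c, z) (k + s + 1 + 1) := by
    -- stage two facts
    rcases Nat.eq_zero_or_pos k with rfl | hkpos
    · intro y hy hy'
      simp only [zero_add, pow_zero, mul_one] at *
      by_cases h0 : 0 ≤ y
      · right
        rw [had]
        convert A2 (y + 1) (by omega) (by omega) using 1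
        simp [kn]; ring
      · left
        convert A1 (-y) (by omega) (by omega) using 1
        simp
    · obtain ⟨r, rfl⟩ : ∃ r, k = r + 1 := ⟨k - 1, by omega⟩
      have hB : ∀ i ≤ r, a (0 + s + 1 + i) = 0 + i := by
        intro i hi
        simp only [ha, zero_add]
        rw [show r + 1 + (s + 1 + i) = i + (r + 1 + s + 1) by ring, Nat.add_mod_right]
        exact Nat.mod_eq_of_lt (by omega)
      have B1 := fun (h : ℤ) h1 h2 => phase N a (c, z) (0 + s + 1) 0 _ _ (A1 h h1 h2) r hB
      have B2 := fun (h : ℤ) h1 h2 => phase N a (c, z) (0 + s + 1) 0 _ _ (A2 h h1 h2) r hB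
      rw [show 0 + s + 1 + r + 1 = r + 1 + s + 1 by ring] at B1 B2
      intro y hy hy'
      have hP : (2:ℤ) ^ (r + 1 + s) = 2 ^ (r+1) * 2 ^ s := by ring
      have hR : (2:ℤ) ^ (r + 1) = 2 * 2 ^ r := by ring
      have hr0 : (0:ℤ) < 2 ^ r := by positivity
      have hs0 : (0:ℤ) < 2 ^ s := by positivity
      have hr1 : (0:ℤ) < 2 ^ (r+1) := by positivity
      by_cases h0 : 0 ≤ y
      · have e1 := Int.mul_ediv_add_emod y (2 ^ (r+1))
        have e2 := Int.emod_nonneg y hr1.ne'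
        have e3 := Int.emod_lt_of_pos y hr1
        have e4 : 0 ≤ y / 2 ^ (r+1) := Int.ediv_nonneg h0 hr1.le
        have e5 : y / 2 ^ (r+1) < 2 ^ s := Int.ediv_lt_of_lt_mul hr1 (by rw [mul_comm, ← hP]; exact hy')
        generalize y / 2 ^ (r+1) = q at *
        generalize y % 2 ^ (r+1) = m at *
        by_cases hm : m < 2 ^ r
        · right
          rw [had]
          convert (B2 (q+1) (by omega) (by omega)).1 m e2 hm using 1
          simp only [kn, sg_not]
          congr 1
          rw [add_assoc, add_assoc, ← Int.cast_add, ← Int.cast_add]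
          congr 2
          rw [← e1]; ring
        · left
          convert (B2 (q+1) (by omega) (by omega)).2 (2 ^ (r+1) - m) (by omega) (by omega) using 1
          simp only [sg_not, Bool.not_not]
          congr 1
          rw [add_assoc, ← Int.cast_add]
          congr 2
          rw [← e1]; ring
      · obtain ⟨x, rfl⟩ : ∃ x, y = -x := ⟨-y, by ring⟩
        have h0 : 0 ≤ x := by omega
        have e1 := Int.mul_ediv_add_emod x (2 ^ (r+1))
        have e2 := Int.emod_nonneg x hr1.ne'
        have e3 := Int.emod_lt_of_pos x hr1
        have e4 : 0 ≤ x / 2 ^ (r+1) := Int.ediv_nonneg h0 hr1.le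
        have e5 : x / 2 ^ (r+1) < 2 ^ s :=
          Int.ediv_lt_of_lt_mul hr1 (by rw [mul_comm, ← hP]; omega)
        generalize x / 2 ^ (r+1) = q at *
        generalize x % 2 ^ (r+1) = m at *
        by_cases hm : m < 2 ^ r
        · left
          convert (B1 q (by omega) (by omega)).1 m e2 hm using 1
          congr 1
          rw [add_assoc, ← Int.cast_add]
          congr 2
          rw [← e1]; ring
        · right
          rw [had]
          convert (B1 q (by omega) (by omega)).2 (2 ^ (r+1) - m) (by omega) (by omega) using 1
          simp only [kn]
          congr 1
          rw [add_assoc, add_assoc, ← Int.cast_add, ← Int.cast_add]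
          congr 2
          rw [← e1]; ring
  have side : ∀ j : ZMod N, (c, j) ∈ inf (kn N) a (c, z) (k + s + 1 + 1) := by
    intro j
    set v : ZMod N := (sg c : ZMod N) * (j - z) with hv
    have hc : (sg c : ZMod N) * (sg c : ZMod N) = 1 := by
      rw [← Int.cast_mul, sg_mul]; simp
    have hj : j = z + (sg c : ZMod N) * v := by
      rw [hv, ← mul_assoc, hc]; ring
    have hlt := ZMod.val_lt v
    have hNz : (N : ℤ) < 2 * 2 ^ (k + s) := by
      have : (N : ℤ) < 2 ^ (k + s + 1) := by exact_mod_cast hN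
      rw [pow_succ] at this; omega
    have hlt' : (v.val : ℤ) < N := by exact_mod_cast hlt
    by_cases hs : (v.val : ℤ) < 2 ^ (k + s)
    · have := key v.val (by have : (0:ℤ) < 2 ^ (k+s) := by positivity
                            omega) hs
      rw [hj]
      simpa using this
    · have := key (v.val - N) (by omega) (by have : (0:ℤ) < 2 ^ (k+s) := by positivity
                                             omega)
      rw [hj]
      simpa using this
  ext ⟨c', j⟩
  simp only [Set.mem_univ, iff_true]
  by_cases hc : c' = c
  · subst hc; exact side j
  · have hc' : c' = !c := by cases c <;> cases c' <;> simp_all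
    have h1 := side (kn N k (c', j)).2
    have h2 : (c, (kn N k (c', j)).2) = kn N k (c', j) := by subst hc'; simp [kn]
    rw [h2] at h1
    rcases h1 with h1 | h1
    · right; rw [had]; exact h1
    · left; rw [had, kn_inv] at h1; exact h1

theorem prim (m : ℕ) (hprime : Nat.Prime m) (hm2 : 2 < m)
    (hord : ∀ d : ℕ, d ∣ m - 1 → d ≠ m - 1 → ¬ 2 ^ d ≡ 1 [MOD m]) (x : ZMod m) (hx : x ≠ 0) :
    ∃ k < m - 1, (2 : ZMod m) ^ k = x := by
  haveI : Fact m.Prime := ⟨hprime⟩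
  have h2 : (2 : ZMod m) ≠ 0 := by
    intro h
    have : ((2:ℕ) : ZMod m) = 0 := by exact_mod_cast h
    rw [ZMod.natCast_eq_zero_iff] at this
    exact absurd (Nat.le_of_dvd (by norm_num) this) (by omega)
  have ho : orderOf (2 : ZMod m) = m - 1 := by
    by_contra hne
    refine hord (orderOf (2 : ZMod m)) (orderOf_dvd_of_pow_eq_one (ZMod.pow_card_sub_one_eq_one h2)) hne ?_
    rw [← ZMod.natCast_eq_natCast_iff]
    push_cast
    exact pow_orderOf_eq_one _
  let u : (ZMod m)ˣ := Units.mk0 2 h2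
  have hu : orderOf u = m - 1 := by rw [← ho, ← orderOf_units]; rfl
  have hcard : orderOf u = Nat.card (ZMod m)ˣ := by
    rw [hu, Nat.card_eq_fintype_card, ZMod.card_units]
  have hmem : Units.mk0 x hx ∈ Submonoid.powers u := by
    have := (Subgroup.eq_top_of_card_eq (Subgroup.zpowers u) (by rw [Nat.card_zpowers, hcard]))
    rw [mem_powers_iff_mem_zpowers, this]; trivial
  classical
  rw [mem_powers_iff_mem_range_orderOf] at hmem
  obtain ⟨k, hk, hkx⟩ := Finset.mem_image.1 hmem
  refine ⟨k, by rw [← hu]; exact Finset.mem_range.1 hk, ?_⟩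
  have := congrArg Units.val hkx
  simpa [u] using this

/-- the neighbours of the apex -/
def apex (m q : ℕ) : Finset (Bool × ZMod (m * q)) :=
  (Finset.univ ×ˢ Finset.range q).image (fun p => (p.1, ((m * p.2 : ℕ) : ZMod (m * q)))) ∪
  (Finset.Ico 1 (m - 1)).image (fun k => (false, ((1 - 2 ^ k : ℤ) : ZMod (m * q))))

theorem apex_card (m q : ℕ) : (apex m q).card ≤ 2 * q + (m - 2) := by
  refine (Finset.card_union_le _ _).trans (add_le_add (Finset.card_image_le.trans ?_)
    (Finset.card_image_le.trans ?_))
  · simp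
  · simp; omega

theorem mem_apex (m q : ℕ) [NeZero (m * q)] (c : Bool) (j : ZMod (m * q))
    (hj : ZMod.castHom (dvd_mul_right m q) (ZMod m) j = 0) : (c, j) ∈ apex m q := by
  have h1 : ((j.val : ℕ) : ZMod m) = 0 := by
    rw [← hj]
    conv_rhs => rw [← ZMod.natCast_zmod_val j]
    rw [map_natCast]
  rw [ZMod.natCast_eq_zero_iff] at h1
  obtain ⟨t, ht⟩ := h1
  have hlt := ZMod.val_lt j
  rw [ht] at hlt
  refine Finset.mem_union_left _ (Finset.mem_image.2 ⟨(c, t), ?_, ?_⟩)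
  · simpa using lt_of_mul_lt_mul_left hlt (Nat.zero_le m)
  · simp only [← ht, ZMod.natCast_zmod_val]

theorem nbr_apex (m q : ℕ) [NeZero (m * q)] (k : ℕ) (hk : k < m - 1) :
    kn (m * q) k (true, 1) ∈ apex m q := by
  have e : kn (m * q) k (true, 1) = (false, ((1 - 2 ^ k : ℤ) : ZMod (m * q))) := by
    simp [kn, sg]; ring
  rw [e]
  rcases Nat.eq_zero_or_pos k with rfl | h
  · apply mem_apex; simp
  · exact Finset.mem_union_right _ (Finset.mem_image.2 ⟨k, by simp; omega, rfl⟩)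

theorem edge_count (N d : ℕ) [NeZero N] (S : Finset (Bool × ZMod N)) :
    (bg (kn N) d (S : Set _)).edgeSet.ncard ≤ N * d + S.card := by
  classical
  let F : Finset (Sym2 (Option (Bool × ZMod N))) :=
    ((Finset.univ : Finset (ZMod N)) ×ˢ Finset.range d).image
      (fun p => s(some (false, p.1), some (kn N p.2 (false, p.1)))) ∪
    S.image (fun p => s(none, some p))
  have hrel : ∀ x y, rel (kn N) d (S : Set _) x y → s(x, y) ∈ F := by
    rintro (_ | x) (_ | y) h
    · exact h.elim
    · exact Finset.mem_union_right _ (Finset.mem_image.2 ⟨y, h, rfl⟩)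
    · exact h.elim
    · obtain ⟨k, hk, rfl⟩ := h
      refine Finset.mem_union_left _ (Finset.mem_image.2 ?_)
      obtain ⟨c, z⟩ := x
      cases c
      · exact ⟨(z, k), by simpa using hk, rfl⟩
      · refine ⟨((kn N k (true, z)).2, k), by simpa using hk, ?_⟩
        have : ((false, (kn N k (true, z)).2) : Bool × ZMod N) = kn N k (true, z) := rfl
        simp only [this, kn_inv]
        exact Sym2.eq_swap
  have hsub : (bg (kn N) d (S : Set _)).edgeSet ⊆ (F : Set _) := by
    intro e
    induction e with
    | h x y =>
      intro h
      rcases ((SimpleGraph.fromRel_adj _ _ _).1 h).2 with h | h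
      · exact hrel _ _ h
      · rw [Sym2.eq_swap]; exact hrel _ _ h
  refine (Set.ncard_le_ncard hsub F.finite_toSet).trans ?_
  rw [Set.ncard_coe_finset]
  refine (Finset.card_union_le _ _).trans (add_le_add (Finset.card_image_le.trans ?_)
    Finset.card_image_le)
  simp [ZMod.card]

theorem transfer {V : Type*} [Fintype V] (G : SimpleGraph V) (N b E : ℕ) (hV : Fintype.card V = N)
    (hb : b ≤ Nat.clog 2 N) (hE : G.edgeSet.ncard ≤ E) (u0 : V)
    (h : ∀ u, IsBroadcastProtocol G u b) : broadcastFunction N ≤ E := by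
  let e : V ≃ Fin N := Fintype.equivFinOfCardEq hV
  let H := G.map e.toEmbedding
  let i : G ≃g H := SimpleGraph.Iso.map e G
  have hH : ∀ u, IsBroadcastProtocol H u b := by
    intro u
    have := protocol_iso i (h (i.symm u))
    simpa using this
  refine le_trans (Nat.sInf_le ⟨H, ?_, rfl, ?_⟩) (le_trans (le_of_eq ?_) hE)
  · haveI : Nonempty (Fin N) := ⟨e u0⟩
    exact ⟨fun x y => reachable_of_protocol (hH x) y⟩
  · intro u
    exact (Nat.sInf_le (hH u)).trans hb
  · exact (Nat.card_congr i.mapEdgeSet).symm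

end Bcast

/-- Harutyunyan–Liestman: if `n` is even, `m = ⌈log₂ n⌉ > 2` is prime, `m ≠ 2^j - 1` for
every integer `j`, `m` divides `n`, and `2^d ≢ 1 (mod m)` for every divisor `d ≠ m - 1` of
`m - 1`, then `B(n+1) ≤ n·⌊log₂ n⌋/2 + n/⌈log₂ n⌉ + ⌈log₂ n⌉ - 2`. -/
theorem broadcastFunction_succ_le (n m : ℕ) (heven : Even n) (hm : m = Nat.clog 2 n)
    (hm2 : 2 < m) (hprime : Nat.Prime m) (hmj : ∀ j : ℕ, (m : ℤ) ≠ 2 ^ j - 1)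
    (hdvd : m ∣ n)
    (hord : ∀ d : ℕ, d ∣ m - 1 → d ≠ m - 1 → ¬ 2 ^ d ≡ 1 [MOD m]) :
    broadcastFunction (n + 1) ≤ n * Nat.log 2 n / 2 + n / m + m - 2 := by
  obtain ⟨p, rfl⟩ : ∃ p, n = 2 * p := ⟨n / 2, by obtain ⟨r, hr⟩ := heven; omega⟩
  have hmp : m ∣ p := by
    refine Nat.Coprime.dvd_of_dvd_mul_left ?_ hdvd
    exact (Nat.coprime_primes hprime Nat.prime_two).2 (by omega)
  obtain ⟨q, rfl⟩ := hmp
  have hle : 2 * (m * q) ≤ 2 ^ m := by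
    have := Nat.le_pow_clog (b := 2) (by norm_num) (2 * (m * q))
    rwa [← hm] at this
  have hlt : 2 * (m * q) < 2 ^ m := by
    refine lt_of_le_of_ne hle fun h => ?_
    rw [h] at hdvd
    have := Nat.le_of_dvd (by norm_num) (hprime.dvd_of_dvd_pow hdvd)
    omega
  obtain ⟨d, rfl⟩ : ∃ d, m = d + 1 := ⟨m - 1, by omega⟩
  have hlow : 2 ^ d < 2 * ((d + 1) * q) := by
    rw [← Nat.lt_clog_iff_pow_lt (by norm_num)]; omega
  have hlog : d ≤ Nat.log 2 (2 * ((d + 1) * q)) := Nat.le_log_of_pow_le (by norm_num) hlow.le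
  have hq : 0 < q := by
    rcases Nat.eq_zero_or_pos q with rfl | h
    · simp at hlow
    · exact h
  haveI : NeZero ((d + 1) * q) := ⟨by positivity⟩
  have hN : (d + 1) * q < 2 ^ d := by rw [pow_succ] at hlt; omega
  have hall := fun k hk w => Bcast.inf_all ((d + 1) * q) d k hk hN w
  have hd : 0 < d := by omega
  have had : ∀ k, (fun i => (k + i) % d) d = (fun i => (k + i) % d) 0 := fun k => by simp
  refine Bcast.transfer (Bcast.bg (Bcast.kn ((d+1) * q)) d (Bcast.apex (d+1) q : Set _)) _ (d + 1)
    _ ?_ ?_ ((Bcast.edge_count _ _ _).trans ?_) none ?_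
  · simp [ZMod.card]
  · exact hm.le.trans (Nat.clog_mono_right 2 (by simp [ZMod.card]))
  · have h1 := Bcast.apex_card (d + 1) q
    have h2 : 2 * ((d + 1) * q) / (d + 1) = 2 * q := by
      rw [show 2 * ((d + 1) * q) = (d + 1) * (2 * q) by ring]
      exact Nat.mul_div_cancel_left _ (by omega)
    have h3 : 2 * ((d + 1) * q) * Nat.log 2 (2 * ((d + 1) * q)) / 2
        = (d + 1) * q * Nat.log 2 (2 * ((d + 1) * q)) := by
      rw [mul_assoc]; exact Nat.mul_div_cancel_left _ (by norm_num)
    have h4 : (d + 1) * q * d ≤ (d + 1) * q * Nat.log 2 (2 * ((d + 1) * q)) :=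
      Nat.mul_le_mul_left _ hlog
    rw [h2, h3]
    omega
  · rintro (_ | ⟨c, j⟩)
    · exact Bcast.protocol_none _ (Bcast.kn_inv _) (Bcast.kn_ne _) d hd _ (fun i => (0 + i) % d)
        (fun i => Nat.mod_lt _ hd) (had 0) (true, 1)
        (fun k hk => Bcast.nbr_apex _ _ k (by omega)) (hall 0 hd _)
    · set φ := ZMod.castHom (dvd_mul_right (d+1) q) (ZMod (d+1)) with hφ
      by_cases hj : φ j = 0
      · exact Bcast.protocol_some _ (Bcast.kn_inv _) (Bcast.kn_ne _) d hd _ (fun i => (0 + i) % d)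
          (fun i => Nat.mod_lt _ hd) (had 0) (c, j) (c, j) (Bcast.mem_apex _ _ _ _ hj)
          (Or.inl rfl) (hall 0 hd _)
      · have hne : (-(Bcast.sg c : ZMod (d+1)) * φ j) ≠ 0 := by
          cases c <;> simpa [Bcast.sg] using hj
        obtain ⟨k, hk, hkx⟩ := Bcast.prim (d+1) hprime hm2 hord _ hne
        have hk' : k < d := by omega
        refine Bcast.protocol_some _ (Bcast.kn_inv _) (Bcast.kn_ne _) d hd _ (fun i => (k + i) % d)
          (fun i => Nat.mod_lt _ hd) (had k) (c, j) (Bcast.kn _ k (c, j)) 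
          (Bcast.mem_apex _ _ _ _ ?_) (Or.inr ?_) (hall k hk' _)
        · rw [map_add, map_intCast]
          push_cast
          rw [hkx]
          cases c <;> simp [Bcast.sg, hφ]
        · simp [Nat.mod_eq_of_lt hk']
end
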